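/- arXiv:1806.09578 — 4 statements merged into one kernel-verified Lean document; each statement's English description precedes it below -/
import Mathlib

section
/- Let H be a real Hilbert space, let K ⊆ H be compact, and let δ > 0. Then there exists a function φ : H → ℝ of class C^∞ (infinitely Fréchet differentiable) with values in [0,1] such that φ(x) = 1 for all x with dist(x, K) ≤ δ, φ(x) = 0 for all x with dist(x, K) > 2δ, and moreover for every n ∈ ℕ the n-th iterated Fréchet derivative of φ is bounded on H. -/
/-- A smooth real function all of whose iterated Fréchet derivatives, including the function
itself, are bounded. -/
def HasBoundedDerivs {E : Type*} [NormedAddCommGroup E] [NormedSpace ℝ E] (f : E → ℝ) : Prop :=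
  ContDiff ℝ (⊤ : ℕ∞) f ∧ ∀ n : ℕ, ∃ C : ℝ, ∀ x, ‖iteratedFDeriv ℝ n f x‖ ≤ C

namespace HasBoundedDerivs

variable {E : Type*} [NormedAddCommGroup E] [NormedSpace ℝ E] {f g : E → ℝ}

theorem const (c : ℝ) : HasBoundedDerivs (fun _ : E ↦ c) := by
  refine ⟨contDiff_const, fun n ↦ ⟨‖c‖, fun x ↦ ?_⟩⟩
  rcases eq_or_ne n 0 with rfl | hn
  · simp
  · simp [iteratedFDeriv_const_of_ne hn]

theorem sub (hf : HasBoundedDerivs f) (hg : HasBoundedDerivs g) :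
    HasBoundedDerivs (fun x ↦ f x - g x) := by
  refine ⟨hf.1.sub hg.1, fun n ↦ ?_⟩
  obtain ⟨C, hC⟩ := hf.2 n
  obtain ⟨D, hD⟩ := hg.2 n
  refine ⟨C + D, fun x ↦ ?_⟩
  have hn : (n : WithTop ℕ∞) ≤ ((⊤ : ℕ∞) : WithTop ℕ∞) := by exact_mod_cast le_top
  rw [fun_iteratedFDeriv_sub_apply (hf.1.of_le hn).contDiffAt (hg.1.of_le hn).contDiffAt]
  exact (norm_sub_le _ _).trans (add_le_add (hC x) (hD x))

theorem mul (hf : HasBoundedDerivs f) (hg : HasBoundedDerivs g) :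
    HasBoundedDerivs (fun x ↦ f x * g x) := by
  refine ⟨hf.1.mul hg.1, fun n ↦ ?_⟩
  choose C hC using hf.2
  choose D hD using hg.2
  refine ⟨∑ i ∈ Finset.range (n + 1), (n.choose i : ℝ) * C i * D (n - i), fun x ↦ ?_⟩
  have hn : (n : WithTop ℕ∞) ≤ ((⊤ : ℕ∞) : WithTop ℕ∞) := by exact_mod_cast le_top
  refine (norm_iteratedFDeriv_mul_le hf.1 hg.1 x hn).trans (Finset.sum_le_sum fun i _ ↦ ?_)
  have hC0 : 0 ≤ C i := (norm_nonneg _).trans (hC i x)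
  gcongr
  · exact hC i x
  · exact hD (n - i) x

theorem prod {ι : Type*} {f : ι → E → ℝ} (s : Finset ι) (hf : ∀ i ∈ s, HasBoundedDerivs (f i)) :
    HasBoundedDerivs (fun x ↦ ∏ i ∈ s, f i x) := by
  classical
  induction s using Finset.induction_on with
  | empty => simpa using const (E := E) 1
  | insert i s hi ih =>
    simp only [Finset.prod_insert hi]
    exact (hf i (by simp)).mul (ih fun j hj ↦ hf j (by simp [hj]))

theorem comp_sub_right (hf : HasBoundedDerivs f) (a : E) :
    HasBoundedDerivs (fun x ↦ f (x - a)) := by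
  refine ⟨hf.1.comp (contDiff_id.sub contDiff_const), fun n ↦ ?_⟩
  obtain ⟨C, hC⟩ := hf.2 n
  exact ⟨C, fun x ↦ by rw [iteratedFDeriv_comp_sub]; exact hC _⟩

/-- If `f` has temperate growth, maps a bounded set into a compact set, and `g ∘ f` vanishes
locally outside that bounded set, then `g ∘ f` has bounded derivatives for every smooth `g`. -/
theorem comp_of_hasTemperateGrowth {F : Type*} [NormedAddCommGroup F] [NormedSpace ℝ F]
    {g : F → ℝ} {f : E → F} (hg : ContDiff ℝ (⊤ : ℕ∞) g) (hf : f.HasTemperateGrowth)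
    {R : ℝ} {L : Set F} (hL : IsCompact L) (hfL : ∀ x, ‖x‖ ≤ R → f x ∈ L)
    (hgf : ∀ x, R < ‖x‖ → g (f x) = 0) : HasBoundedDerivs (g ∘ f) := by
  refine ⟨hg.comp hf.1, fun n ↦ ?_⟩
  have hn (i : ℕ) : (i : WithTop ℕ∞) ≤ ((⊤ : ℕ∞) : WithTop ℕ∞) := by exact_mod_cast le_top
  have hbound (i : ℕ) := hL.exists_bound_of_continuousOn
    (hg.continuous_iteratedFDeriv (hn i)).continuousOn
  choose C hC using hbound
  obtain ⟨k, D, hD0, hD⟩ := hf.norm_iteratedFDeriv_le_uniform n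
  set C' : ℝ := ∑ i ∈ Finset.range (n + 1), |C i|
  set D' : ℝ := 1 + D * (1 + |R|) ^ k with hD'
  have hD'1 : 1 ≤ D' := le_add_of_nonneg_right (by positivity)
  refine ⟨n.factorial * C' * D' ^ n, fun x ↦ ?_⟩
  rcases le_or_gt ‖x‖ R with hx | hx
  · refine norm_iteratedFDeriv_comp_le hg hf.1 (hn n) x (fun i hi ↦ ?_) fun i hi hin ↦ ?_
    · refine (hC i _ (hfL x hx)).trans ((le_abs_self _).trans ?_)
      exact Finset.single_le_sum (f := fun i ↦ |C i|) (fun _ _ ↦ abs_nonneg _)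
        (Finset.mem_range.2 (Nat.lt_succ_of_le hi))
    · calc ‖iteratedFDeriv ℝ i f x‖ ≤ D * (1 + ‖x‖) ^ k := hD i hin x
        _ ≤ D * (1 + |R|) ^ k := by gcongr; exact hx.trans (le_abs_self R)
        _ ≤ D' := by simp [hD']
        _ ≤ D' ^ i := le_self_pow₀ hD'1 (by omega)
  · have hzero : g ∘ f =ᶠ[nhds x] fun _ ↦ (0 : ℝ) := by
      filter_upwards [continuous_norm.continuousAt.eventually_const_lt hx] with y hy
      exact hgf y hy
    rw [(hzero.iteratedFDeriv ℝ n).eq_of_nhds]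
    simp only [iteratedFDeriv_fun_zero, Pi.zero_apply, norm_zero]
    positivity

end HasBoundedDerivs

/-- On an inner product space there is a radial cut-off with bounded derivatives between two
concentric balls. -/
theorem exists_hasBoundedDerivs_cutoff_ball {H : Type*} [NormedAddCommGroup H]
    [InnerProductSpace ℝ H] {r R : ℝ} (hr : 0 ≤ r) (hrR : r < R) :
    ∃ ψ : H → ℝ, HasBoundedDerivs ψ ∧ (∀ x, ψ x ∈ Set.Icc (0 : ℝ) 1) ∧
      (∀ x, ‖x‖ ≤ r → ψ x = 1) ∧ (∀ x, R < ‖x‖ → ψ x = 0) := by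
  have hpos : 0 < R ^ 2 - r ^ 2 := by nlinarith
  set f : H → ℝ := fun x ↦ (R ^ 2 - ‖x‖ ^ 2) * (R ^ 2 - r ^ 2)⁻¹ with hf
  have hvanish (x : H) (hx : R < ‖x‖) : Real.smoothTransition (f x) = 0 := by
    refine Real.smoothTransition.zero_of_nonpos
      (mul_nonpos_of_nonpos_of_nonneg ?_ (inv_nonneg.2 hpos.le))
    nlinarith
  have hfg : f.HasTemperateGrowth := by fun_prop
  refine ⟨Real.smoothTransition ∘ f, ?_, fun x ↦ ⟨Real.smoothTransition.nonneg _,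
    Real.smoothTransition.le_one _⟩, fun x hx ↦ Real.smoothTransition.one_of_one_le ?_, hvanish⟩
  · refine .comp_of_hasTemperateGrowth Real.smoothTransition.contDiff hfg (R := R)
      (L := Set.Icc 0 (R ^ 2 * (R ^ 2 - r ^ 2)⁻¹)) isCompact_Icc (fun x hx ↦ ⟨?_, ?_⟩) hvanish
    · exact mul_nonneg (by nlinarith [norm_nonneg x]) (inv_nonneg.2 hpos.le)
    · exact mul_le_mul_of_nonneg_right (by nlinarith [norm_nonneg x]) (inv_nonneg.2 hpos.le)
  · simp only [hf]
    rw [← div_eq_mul_inv, one_le_div hpos]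
    nlinarith [norm_nonneg x]

/-- Smooth cut-off around a compact subset of a Hilbert space: there is a `C^∞` function
`φ : H → [0,1]` equal to `1` on the closed `δ`-neighbourhood of `K`, vanishing outside the
closed `2δ`-neighbourhood of `K`, all of whose iterated derivatives are bounded. -/
theorem exists_smooth_cutoff_of_isCompact
    {H : Type*} [NormedAddCommGroup H] [InnerProductSpace ℝ H] [CompleteSpace H]
    (K : Set H) (hK : IsCompact K) (δ : ℝ) (hδ : 0 < δ) :
    ∃ φ : H → ℝ, ContDiff ℝ (⊤ : ℕ∞) φ ∧ (∀ x, φ x ∈ Set.Icc (0:ℝ) 1) ∧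
      (∀ x, Metric.infDist x K ≤ δ → φ x = 1) ∧
      (∀ x, 2 * δ < Metric.infDist x K → φ x = 0) ∧
      (∀ n : ℕ, ∃ C : ℝ, ∀ x, ‖iteratedFDeriv ℝ n φ x‖ ≤ C) := by
  rcases K.eq_empty_or_nonempty with rfl | hne
  · have h := HasBoundedDerivs.const (E := H) 1
    refine ⟨fun _ ↦ 1, h.1, by simp, by simp, fun x hx ↦ ?_, h.2⟩
    rw [Metric.infDist_empty] at hx
    linarith
  obtain ⟨t, htK, htfin, hcover⟩ := hK.finite_cover_balls (e := δ / 4) (by linarith)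
  obtain ⟨ψ, hψ, hψI, hψ1, hψ0⟩ := exists_hasBoundedDerivs_cutoff_ball (H := H)
    (r := 3 / 2 * δ) (R := 2 * δ) (by linarith) (by linarith)
  have hφ : HasBoundedDerivs fun x ↦ 1 - ∏ k ∈ htfin.toFinset, (1 - ψ (x - k)) :=
    (HasBoundedDerivs.const 1).sub <| .prod _ fun k _ ↦
      (HasBoundedDerivs.const 1).sub (hψ.comp_sub_right k)
  refine ⟨_, hφ.1, fun x ↦ ⟨sub_nonneg.2 ?_, sub_le_self _ ?_⟩, fun x hx ↦ ?_, fun x hx ↦ ?_,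
    hφ.2⟩
  · exact Finset.prod_le_one (fun k _ ↦ sub_nonneg.2 (hψI _).2) fun k _ ↦ sub_le_self _ (hψI _).1
  · exact Finset.prod_nonneg fun k _ ↦ sub_nonneg.2 (hψI _).2
  · obtain ⟨y, hyK, hy⟩ := (Metric.infDist_lt_iff (r := 5 / 4 * δ) hne).1
      (show Metric.infDist x K < 5 / 4 * δ by linarith)
    obtain ⟨k, hk, hyk⟩ := Set.mem_iUnion₂.1 (hcover hyK)
    rw [sub_eq_self, Finset.prod_eq_zero (htfin.mem_toFinset.2 hk)]
    rw [hψ1, sub_self]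
    rw [← dist_eq_norm]
    linarith [dist_triangle x y k, Metric.mem_ball.1 hyk]
  · rw [sub_eq_zero, Finset.prod_eq_one]
    intro k hk
    rw [hψ0, sub_zero]
    rw [← dist_eq_norm]
    exact hx.trans_le (Metric.infDist_le_dist_of_mem (htK (htfin.mem_toFinset.1 hk)))
end

section
/- Let d ∈ ℕ, let M be a second-countable Hausdorff C¹ manifold without boundary of dimension d (modelled on ℝ^d), let K ⊆ M be a closed set, and let H be a real Hilbert space containing a linear subspace of dimension d + 1. Let f : K → H be a continuous function such that 0 ∉ f(K). Then there exists a continuous function f̄ : M → H such that f̄(x) = f(x) for all x ∈ K and 0 ∉ f̄(M). -/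
open Set Filter Topology Module
open scoped BoundedContinuousFunction

/-- One refinement step towards a Banach-valued Tietze extension: a continuous map `g` with
`f - g` valued in a convex set `S ∋ 0` on the closed set `K` can be changed by a map valued in `S`
so as to become `ε`-close to `f` on `K`. -/
theorem exists_continuousMap_norm_sub_lt_of_isClosed {X E : Type*} [TopologicalSpace X]
    [NormalSpace X] [ParacompactSpace X] [NormedAddCommGroup E] [NormedSpace ℝ E]
    {K : Set X} (hK : IsClosed K) {f : X → E} (hf : ContinuousOn f K) {S : Set E}
    (hS : Convex ℝ S) (hS0 : 0 ∈ S) {g : C(X, E)} (hg : ∀ x ∈ K, f x - g x ∈ S)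
    {ε : ℝ} (hε : 0 < ε) :
    ∃ g' : C(X, E), (∀ x ∈ K, ‖f x - g' x‖ < ε) ∧ ∀ x, g' x - g x ∈ S := by
  obtain ⟨k, hk⟩ := exists_continuous_forall_mem_convex_of_local_const
    (t := fun x ↦ S ∩ {v | x ∈ K → v ∈ Metric.ball (f x - g x) ε})
    (fun x ↦ hS.inter <| by
      by_cases hx : x ∈ K
      · simpa only [hx, true_imp_iff] using! convex_ball (f x - g x) ε
      · simpa [hx] using! convex_univ)
    (fun x ↦ by
      by_cases hx : x ∈ K
      · refine ⟨f x - g x, ?_⟩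
        have hcont : ContinuousWithinAt (fun y ↦ f y - g y) K x :=
          (hf x hx).sub g.continuous.continuousWithinAt
        filter_upwards [eventually_nhdsWithin_iff.1
          (hcont.eventually (Metric.ball_mem_nhds _ hε))] with y hy
        exact ⟨hg x hx, fun hyK ↦ Metric.mem_ball_comm.1 (hy hyK)⟩
      · refine ⟨0, ?_⟩
        filter_upwards [hK.isOpen_compl.mem_nhds hx] with y hy
        exact ⟨hS0, fun hyK ↦ absurd hyK hy⟩)
  refine ⟨g + k, fun x hx ↦ ?_, fun x ↦ ?_⟩
  · have := (hk x).2 hx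
    rw [Metric.mem_ball_comm, mem_ball_iff_norm] at this
    simpa [sub_sub] using this
  · simpa using (hk x).1

/-- **Tietze extension theorem** for maps into a Banach space from a closed subset of a
paracompact normal space. -/
theorem ContinuousOn.exists_continuous_eqOn_of_isClosed {X E : Type*} [TopologicalSpace X]
    [NormalSpace X] [ParacompactSpace X] [NormedAddCommGroup E] [NormedSpace ℝ E]
    [CompleteSpace E] {K : Set X} (hK : IsClosed K) {f : X → E} (hf : ContinuousOn f K) :
    ∃ g : X → E, Continuous g ∧ EqOn g f K := by
  obtain ⟨g₀, hg₀, -⟩ := exists_continuousMap_norm_sub_lt_of_isClosed hK hf convex_univ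
    (mem_univ 0) (g := 0) (fun _ _ ↦ mem_univ _) one_pos
  have step (n : ℕ) (g : {g : C(X, E) // ∀ x ∈ K, ‖f x - g x‖ < 1 / 2 ^ n}) :
      ∃ g' : {g : C(X, E) // ∀ x ∈ K, ‖f x - g x‖ < 1 / 2 ^ (n + 1)},
        ∀ x, ‖g'.1 x - g.1 x‖ < 1 / 2 ^ n := by
    obtain ⟨g', hg', hdist⟩ := exists_continuousMap_norm_sub_lt_of_isClosed hK hf
      (convex_ball 0 (1 / 2 ^ n)) (Metric.mem_ball_self (by positivity)) (g := g.1)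
      (fun x hx ↦ mem_ball_zero_iff.2 (g.2 x hx)) (ε := 1 / 2 ^ (n + 1)) (by positivity)
    exact ⟨⟨g', hg'⟩, fun x ↦ mem_ball_zero_iff.1 (hdist x)⟩
  choose next hnext using step
  let G : ∀ n : ℕ, {g : C(X, E) // ∀ x ∈ K, ‖f x - g x‖ < 1 / 2 ^ n} := fun n ↦
    Nat.rec ⟨g₀, by simpa using hg₀⟩ (fun n g ↦ next n g) n
  have hG (n : ℕ) (x : X) : dist ((G n).1 x) ((G (n + 1)).1 x) ≤ 2 / 2 / 2 ^ n := by
    rw [dist_comm, dist_eq_norm]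
    simpa using (hnext n (G n) x).le
  choose g hg using fun x ↦ cauchySeq_tendsto_of_complete (cauchySeq_of_le_geometric_two (hG · x))
  have hpow : Tendsto (fun n : ℕ ↦ (2 : ℝ) / 2 ^ n) atTop (𝓝 0) :=
    tendsto_const_nhds.div_atTop (tendsto_pow_atTop_atTop_of_one_lt one_lt_two)
  have hunif : TendstoUniformly (fun n x ↦ (G n).1 x) g atTop := by
    refine Metric.tendstoUniformly_iff.2 fun ε hε ↦ ?_
    filter_upwards [hpow.eventually_lt_const hε] with n hn x
    rw [dist_comm]
    exact (dist_le_of_le_geometric_two_of_tendsto (hG · x) (hg x) n).trans_lt hn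
  refine ⟨g, hunif.continuous (Frequently.of_forall fun n ↦ (G n).1.continuous),
    fun x hx ↦ tendsto_nhds_unique (hg x) (tendsto_iff_norm_sub_tendsto_zero.2 ?_)⟩
  refine squeeze_zero (fun _ ↦ norm_nonneg _) (fun n ↦ ?_) hpow
  rw [norm_sub_rev]
  refine ((G n).2 x hx).le.trans ?_
  gcongr
  norm_num

/-- A continuous map on a compact set inside a chart valued in `E` can be uniformly
approximated by nowhere vanishing maps into a space of dimension larger than that of `E`. -/
theorem exists_continuousOn_ne_zero_norm_sub_le {X E V : Type*} [TopologicalSpace X]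
    [NormedAddCommGroup E] [NormedSpace ℝ E] [FiniteDimensional ℝ E]
    [NormedAddCommGroup V] [NormedSpace ℝ V] [FiniteDimensional ℝ V]
    (hEV : finrank ℝ E < finrank ℝ V) (e : OpenPartialHomeomorph X E) {A : Set X}
    (hA : IsCompact A) (hAe : A ⊆ e.source) {φ : X → V} (hφ : ContinuousOn φ A)
    {ε : ℝ} (hε : 0 < ε) :
    ∃ p : X → V, ContinuousOn p A ∧ (∀ x ∈ A, p x ≠ 0) ∧ ∀ x ∈ A, ‖p x - φ x‖ ≤ ε := by
  have hB : IsClosed (e '' A) := (hA.image_of_continuousOn (e.continuousOn.mono hAe)).isClosed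
  have hcont : ContinuousOn (φ ∘ e.symm) (e '' A) := by
    refine hφ.comp (e.continuousOn_symm.mono ?_) ?_
    · rintro _ ⟨x, hx, rfl⟩
      exact e.map_source (hAe hx)
    · rintro _ ⟨x, hx, rfl⟩
      rwa [e.left_inv (hAe hx)]
  obtain ⟨ψ, hψ, hψφ⟩ := hcont.exists_continuous_eqOn_of_isClosed hB
  obtain ⟨q, hq, hqψ, -⟩ := hψ.exists_contDiff_approx 1 (ε := fun _ ↦ ε / 2)
    continuous_const (fun _ ↦ half_pos hε)
  obtain ⟨v, hv, hvε⟩ := (hq.dense_compl_range_of_finrank_lt_finrank hEV).exists_dist_lt 0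
    (half_pos hε)
  refine ⟨fun x ↦ q (e x) - v, (hq.continuous.comp_continuousOn (e.continuousOn.mono hAe)).sub
    continuousOn_const, fun x _ h ↦ hv ⟨e x, sub_eq_zero.1 h⟩, fun x hx ↦ ?_⟩
  have h₁ : ψ (e x) = φ x := by simpa [e.left_inv (hAe hx)] using hψφ (mem_image_of_mem e hx)
  have h₂ : ‖q (e x) - φ x‖ < ε / 2 := by simpa [h₁, dist_eq_norm] using hqψ (e x)
  rw [dist_zero_left] at hvε
  calc ‖q (e x) - v - φ x‖ = ‖(q (e x) - φ x) - v‖ := by congr 1; abel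
    _ ≤ ‖q (e x) - φ x‖ + ‖v‖ := norm_sub_le _ _
    _ ≤ ε := by linarith

/-- Bounded perturbations vanishing on `K` that make `F` nonzero on a compact subset of a chart
disjoint from `K` are dense. -/
theorem dense_setOf_forall_mem_add_ne_zero {X E V : Type*} [TopologicalSpace X] [T2Space X]
    [NormalSpace X] [NormedAddCommGroup E] [NormedSpace ℝ E] [FiniteDimensional ℝ E]
    [NormedAddCommGroup V] [NormedSpace ℝ V] [FiniteDimensional ℝ V]
    (hEV : finrank ℝ E < finrank ℝ V) {K : Set X} (hK : IsClosed K) {F : X → V}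
    (hF : Continuous F) (e : OpenPartialHomeomorph X E) {A : Set X}
    (hA : IsCompact A) (hAe : A ⊆ e.source) (hAK : Disjoint K A) :
    Dense {h : {h : X →ᵇ V // ∀ x ∈ K, h x = 0} | ∀ x ∈ A, F x + h.1 x ≠ 0} := by
  refine Metric.dense_iff.2 fun h ε hε ↦ ?_
  obtain ⟨p, hp, hp0, hpε⟩ := exists_continuousOn_ne_zero_norm_sub_le hEV e hA hAe
    (hF.add h.1.continuous).continuousOn (half_pos hε)
  have := Metric.instTietzeExtensionClosedBall ℝ (0 : V) (half_pos hε)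
  obtain ⟨k, hkε, hk⟩ := ContinuousMap.exists_forall_mem_restrict_eq hA.isClosed
    (t := Metric.closedBall (0 : V) (ε / 2))
    ⟨A.domRestrict fun x ↦ p x - (F x + h.1 x),
      (hp.sub (hF.add h.1.continuous).continuousOn).domRestrict⟩
    (fun x ↦ mem_closedBall_zero_iff.2 (hpε x x.2))
  obtain ⟨χ, hχK, hχA, hχ⟩ := exists_continuous_zero_one_of_isClosed hK hA.isClosed hAK
  have hbound (x : X) : ‖χ x • k x‖ ≤ ε / 2 := by
    have hk' : ‖k x‖ ≤ ε / 2 := by simpa using hkε x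
    rw [norm_smul, Real.norm_of_nonneg (hχ x).1]
    exact (mul_le_of_le_one_left (norm_nonneg _) (hχ x).2).trans hk'
  let u : X →ᵇ V := BoundedContinuousFunction.ofNormedAddCommGroup (fun x ↦ χ x • k x)
    (χ.continuous.smul k.continuous) (ε / 2) hbound
  refine ⟨⟨h.1 + u, fun x hx ↦ ?_⟩, ?_, fun x hx ↦ ?_⟩
  · simp [u, h.2 x hx, hχK hx]
  · have hu : ‖u‖ ≤ ε / 2 := BoundedContinuousFunction.norm_ofNormedAddCommGroup_le _
      (half_pos hε).le hbound
    rw [Metric.mem_ball, Subtype.dist_eq, dist_eq_norm]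
    simpa using hu.trans_lt (half_lt_self hε)
  · have hkx : k x = p x - (F x + h.1 x) := DFunLike.congr_fun hk (⟨x, hx⟩ : A)
    have : F x + (h.1 + u) x = p x := by
      simp [u, hχA hx, hkx, ← add_assoc]
    rw [this]
    exact hp0 x hx

/-- Bounded perturbations that keep `F` nonzero on a compact set form an open set. -/
theorem isOpen_setOf_forall_mem_add_ne_zero {X V : Type*} [TopologicalSpace X]
    [NormedAddCommGroup V] {F : X → V} (hF : Continuous F) {A : Set X} (hA : IsCompact A) :
    IsOpen {h : X →ᵇ V | ∀ x ∈ A, F x + h x ≠ 0} := by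
  refine isOpen_iff_eventually.2 fun h hh ↦
    hA.eventually_forall_of_forall_eventually fun x hx ↦ ?_
  have : Continuous fun z : (X →ᵇ V) × X ↦ F z.2 + z.1 z.2 := by fun_prop
  exact this.continuousAt.eventually_ne (hh x hx)

/-- A continuous map from a `d`-dimensional topological manifold to a space of dimension larger
than `d` can be modified off any closed set so as to have no zeros there. -/
theorem exists_continuous_eqOn_ne_zero_compl {E M V : Type*} [NormedAddCommGroup E]
    [NormedSpace ℝ E] [FiniteDimensional ℝ E] [TopologicalSpace M] [ChartedSpace E M]
    [T2Space M] [SecondCountableTopology M] [NormalSpace M] [NormedAddCommGroup V]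
    [NormedSpace ℝ V] [FiniteDimensional ℝ V] (hEV : finrank ℝ E < finrank ℝ V)
    {K : Set M} (hK : IsClosed K) {F : M → V} (hF : Continuous F) :
    ∃ G : M → V, Continuous G ∧ EqOn G F K ∧ ∀ x ∉ K, G x ≠ 0 := by
  have : LocallyCompactSpace M := ChartedSpace.locallyCompactSpace E M
  have hnhds (x : M) (hx : x ∈ Kᶜ) :
      ∃ A ∈ 𝓝 x, A ⊆ (chartAt E x).source ∩ Kᶜ ∧ IsCompact A :=
    local_compact_nhds (inter_mem (chart_source_mem_nhds E x) (hK.isOpen_compl.mem_nhds hx))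
  choose! A hAx hA hAc using hnhds
  obtain ⟨t, htK, htc, ht⟩ := TopologicalSpace.countable_cover_nhdsWithin
    fun x hx ↦ mem_nhdsWithin_of_mem_nhds (hAx x hx)
  have hclosed : IsClosed {h : M →ᵇ V | ∀ x ∈ K, h x = 0} := by
    simp only [ofPred_forall]
    exact isClosed_biInter fun x _ ↦ isClosed_eq (by fun_prop) continuous_const
  have : CompleteSpace {h : M →ᵇ V // ∀ x ∈ K, h x = 0} := hclosed.completeSpace_coe
  have : Nonempty {h : M →ᵇ V // ∀ x ∈ K, h x = 0} := ⟨⟨0, fun _ _ ↦ rfl⟩⟩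
  obtain ⟨h, hh⟩ := (dense_biInter_of_isOpen
    (f := fun x ↦ {h : {h : M →ᵇ V // ∀ x ∈ K, h x = 0} | ∀ y ∈ A x, F y + h.1 y ≠ 0})
    (fun x hx ↦ (isOpen_setOf_forall_mem_add_ne_zero hF (hAc x (htK hx))).preimage
      continuous_subtype_val) htc
    (fun x hx ↦ dense_setOf_forall_mem_add_ne_zero hEV hK hF (chartAt E x) (hAc x (htK hx))
      ((hA x (htK hx)).trans inter_subset_left)
      (disjoint_left.2 fun y hyK hy ↦ (hA x (htK hx) hy).2 hyK))).nonempty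
  refine ⟨fun x ↦ F x + h.1 x, hF.add h.1.continuous, fun x hx ↦ by simp [h.2 x hx],
    fun x hx ↦ ?_⟩
  obtain ⟨y, hy, hxy⟩ := mem_iUnion₂.1 (ht hx)
  exact mem_iInter₂.1 hh y hy x hxy

/-- Extension avoiding zero (Lemma on Hausdorff-dimension based extensions): if `M` is a
second-countable Hausdorff `C¹` manifold of dimension `d` without boundary, `K ⊆ M` is
closed, `H` is a real Hilbert space containing a subspace of dimension `d + 1`, and
`f : K → H` is continuous with `0 ∉ f(K)`, then `f` admits a continuous extension
`f̄ : M → H` with `0 ∉ f̄(M)`. -/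
theorem exists_continuous_extension_ne_zero
    {d : ℕ} {M : Type*} [TopologicalSpace M]
    [ChartedSpace (EuclideanSpace ℝ (Fin d)) M]
    [HasGroupoid M (contDiffGroupoid 1 (modelWithCornersSelf ℝ (EuclideanSpace ℝ (Fin d))))]
    [T2Space M] [SecondCountableTopology M]
    {H : Type*} [NormedAddCommGroup H] [InnerProductSpace ℝ H] [CompleteSpace H]
    (hdim : ∃ V : Submodule ℝ H, FiniteDimensional ℝ V ∧ Module.finrank ℝ V = d + 1)
    (K : Set M) (hK : IsClosed K) (f : M → H) (hf : ContinuousOn f K)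
    (hf0 : ∀ x ∈ K, f x ≠ 0) :
    ∃ g : M → H, Continuous g ∧ Set.EqOn g f K ∧ ∀ x, g x ≠ 0 := by
  obtain ⟨V, _, hV⟩ := hdim
  have : LocallyCompactSpace M := ChartedSpace.locallyCompactSpace (EuclideanSpace ℝ (Fin d)) M
  obtain ⟨F, hF, hFf⟩ := hf.exists_continuous_eqOn_of_isClosed hK
  obtain ⟨G, hG, hGF, hG0⟩ := exists_continuous_eqOn_ne_zero_compl
    (E := EuclideanSpace ℝ (Fin d)) (V := V) (by simp [hV]) hK
    (V.orthogonalProjectionOnto.continuous.comp hF)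
  have hproj (x : M) : V.orthogonalProjectionOnto
      (F x + (G x - V.orthogonalProjectionOnto (F x) : V)) = G x := by
    rw [map_add, Submodule.orthogonalProjectionOnto_mem_subspace_eq_self, add_sub_cancel]
  have heq : EqOn (fun x ↦ F x + (G x - V.orthogonalProjectionOnto (F x) : V)) f K := fun x hx ↦ by
    simp [hGF hx, hFf hx]
  refine ⟨fun x ↦ F x + (G x - V.orthogonalProjectionOnto (F x) : V), by fun_prop, heq,
    fun x h ↦ ?_⟩
  by_cases hx : x ∈ K
  · exact hf0 x hx ((heq hx).symm.trans h)
  · refine hG0 x hx ?_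
    exact (hproj x).symm.trans ((congrArg _ h).trans (map_zero _))
end

section
/- Let d ∈ ℕ, let M be a second-countable Hausdorff C¹ manifold without boundary of dimension d (modelled on ℝ^d), let K ⊆ M be a closed set, let H be a real Hilbert space, and let f : K → H be continuous. Then there exists a continuous extension f̄ : M → H with f̄ = f on K such that the restriction of f̄ to the open set M \ K is of class C¹. -/
open Set Function Filter Metric
open scoped Topology Manifold ContDiff

section BumpFunctions

variable {E : Type*} [NormedAddCommGroup E] [NormedSpace ℝ E] [FiniteDimensional ℝ E]
  {H : Type*} [TopologicalSpace H] {I : ModelWithCorners ℝ E H}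
  {M : Type*} [TopologicalSpace M] [ChartedSpace H M] [T2Space M]
  {F : Type*} [NormedAddCommGroup F] [NormedSpace ℝ F] {n : ℕ∞}

/-- On a `C^n` manifold, bump functions are of class `C^n`. -/
theorem SmoothBumpFunction.contMDiff_of_isManifold [IsManifold I n M] {c : M}
    (f : SmoothBumpFunction I c) : ContMDiff I 𝓘(ℝ) n f := by
  refine contMDiff_of_tsupport fun x hx => ?_
  have hxc : x ∈ (chartAt H c).source := f.tsupport_subset_chartAt_source hx
  refine ContMDiffAt.congr_of_eventuallyEq ?_ (f.eventuallyEq_of_mem_source hxc)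
  exact f.contDiffAt.contMDiffAt.comp _ (contMDiffAt_extChartAt' hxc)

/-- On a σ-compact Hausdorff `C^n` manifold, a family of convex sets that admits locally constant
local selections admits a global selection of class `C^n`. -/
theorem exists_contMDiff_forall_mem_of_eventually_const_mem [SigmaCompactSpace M]
    [IsManifold I n M] {t : M → Set F} (ht : ∀ x, Convex ℝ (t x))
    (hloc : ∀ x, ∃ a, ∀ᶠ y in 𝓝 x, a ∈ t y) :
    ∃ g : M → F, ContMDiff I 𝓘(ℝ, F) n g ∧ ∀ x, g x ∈ t x := by
  choose a ha using hloc
  obtain ⟨ι, b, hb⟩ := SmoothBumpCovering.exists_isSubordinate (I := I) isClosed_univ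
    (U := fun x => {y | a x ∈ t y}) fun x _ => ha x
  have hb_smooth (i : ι) : ContMDiff I 𝓘(ℝ) n (b i) := (b i).contMDiff_of_isManifold
  have hsum_smooth : ContMDiff I 𝓘(ℝ) n fun x => ∑ᶠ i, b i x :=
    contMDiff_finsum hb_smooth b.locallyFinite
  have hsum_pos (x : M) : 0 < ∑ᶠ i, b i x :=
    finsum_pos (fun i => (b i).nonneg)
      ⟨b.ind x (mem_univ x), by simp [b.apply_ind x (mem_univ x)]⟩ (b.point_finite x)
  refine ⟨fun x => (∑ᶠ i, b i x)⁻¹ • ∑ᶠ i, b i x • a (b.c i), ?_, fun x => ?_⟩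
  · have hinv_smooth : ContMDiff I 𝓘(ℝ) n fun x => (∑ᶠ i, b i x)⁻¹ := fun x =>
      (contDiffAt_inv ℝ (hsum_pos x).ne').contMDiffAt.comp x (hsum_smooth x)
    exact hinv_smooth.smul (contMDiff_finsum (fun i => (hb_smooth i).smul contMDiff_const)
      (b.locallyFinite.subset fun i => support_smul_subset_left _ _))
  · have hfin := b.point_finite x
    have hsum : ∑ᶠ i, b i x = ∑ i ∈ hfin.toFinset, b i x :=
      finsum_eq_sum_of_support_subset _ (by simp [support])
    have hsum_smul : ∑ᶠ i, b i x • a (b.c i) = ∑ i ∈ hfin.toFinset, b i x • a (b.c i) :=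
      finsum_eq_sum_of_support_subset _ fun i hi => by
        simpa using left_ne_zero_of_smul hi
    have hpos := hsum_pos x
    rw [hsum] at hpos
    simp only [hsum, hsum_smul]
    exact (ht x).centerMass_mem (fun i _ => (b i).nonneg) hpos fun i hi =>
      hb.support_subset i (by simpa using hi)

end BumpFunctions

section Continuity

variable {X : Type*} [PseudoMetricSpace X] {F : Type*} [NormedAddCommGroup F] [NormedSpace ℝ F]

/-- A function that is continuous off a closed set `K`, agrees with `f` on `K`, and whose value at
`y ∉ K` is a convex combination of values of `f` at points of `K` almost closest to `y`,
is continuous. -/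
theorem continuous_of_mem_convexHull_image_inter_ball {K : Set X} (hK : IsClosed K)
    {f g : X → F} (hf : ContinuousOn f K) (hgK : EqOn g f K) (hg : ContinuousOn g Kᶜ)
    (hmem : ∀ y ∉ K, g y ∈ convexHull ℝ (f '' (K ∩ ball y (2 * infDist y K)))) :
    Continuous g := by
  refine continuous_iff_continuousAt.2 fun k => ?_
  by_cases hk : k ∈ K
  swap
  · exact hg.continuousAt (hK.isOpen_compl.mem_nhds hk)
  refine Metric.continuousAt_iff.2 fun ε hε => ?_
  obtain ⟨δ, hδ, hfδ⟩ := Metric.continuousOn_iff.1 hf k hk ε hε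
  refine ⟨δ / 3, by positivity, fun y hy => ?_⟩
  rw [hgK hk]
  by_cases hyK : y ∈ K
  · rw [hgK hyK]
    exact hfδ y hyK (by linarith)
  · refine convexHull_min ?_ (convex_ball (f k) ε) (hmem y hyK)
    rintro _ ⟨z, ⟨hzK, hz⟩, rfl⟩
    refine hfδ z hzK ?_
    have := infDist_le_dist_of_mem (x := y) hk
    have := dist_triangle z y k
    rw [mem_ball] at hz
    linarith

end Continuity

/-- Dugundji-type extension with interior regularity: if `M` is a second-countable
Hausdorff `C¹` manifold of dimension `d` without boundary, `K ⊆ M` is closed, `H` is a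
real Hilbert space and `f : K → H` is continuous, then `f` admits a continuous extension
`f̄ : M → H` whose restriction to the open set `M \ K` is of class `C¹`. -/
theorem exists_continuous_extension_contMDiffOn_compl
    {d : ℕ} {M : Type*} [TopologicalSpace M]
    [ChartedSpace (EuclideanSpace ℝ (Fin d)) M]
    [HasGroupoid M (contDiffGroupoid 1 (modelWithCornersSelf ℝ (EuclideanSpace ℝ (Fin d))))]
    [T2Space M] [SecondCountableTopology M]
    {H : Type*} [NormedAddCommGroup H] [InnerProductSpace ℝ H] [CompleteSpace H]
    (K : Set M) (hK : IsClosed K) (f : M → H) (hf : ContinuousOn f K) :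
    ∃ g : M → H, Continuous g ∧ Set.EqOn g f K ∧
      ContMDiffOn (modelWithCornersSelf ℝ (EuclideanSpace ℝ (Fin d)))
        (modelWithCornersSelf ℝ H) 1 g Kᶜ := by
  classical
  rcases K.eq_empty_or_nonempty with rfl | hne
  · exact ⟨0, continuous_const, eqOn_empty _ _, contMDiffOn_const⟩
  have : IsManifold 𝓘(ℝ, EuclideanSpace ℝ (Fin d)) 1 M := IsManifold.mk' _ _ _
  have : LocallyCompactSpace M := ChartedSpace.locallyCompactSpace (EuclideanSpace ℝ (Fin d)) M
  let := TopologicalSpace.metrizableSpaceMetric M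
  let U : TopologicalSpace.Opens M := ⟨Kᶜ, hK.isOpen_compl⟩
  have : LocallyCompactSpace U := U.isOpen.locallyCompactSpace
  have hloc (x : U) : ∃ a, ∀ᶠ y : U in 𝓝 x,
      a ∈ convexHull ℝ (f '' (K ∩ ball (y : M) (2 * infDist (y : M) K))) := by
    have hpos : 0 < infDist (x : M) K := (hK.notMem_iff_infDist_pos hne).1 x.2
    obtain ⟨k, hk, hxk⟩ := (infDist_lt_iff (r := 2 * infDist (x : M) K) hne).1 (by linarith)
    refine ⟨f k, ?_⟩
    have hcont : Continuous fun y : U => 2 * infDist (y : M) K :=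
      continuous_const.mul ((continuous_infDist_pt K).comp continuous_subtype_val)
    filter_upwards [(continuous_subtype_val.dist continuous_const).continuousAt.eventually_lt
      hcont.continuousAt hxk] with y hy
    exact subset_convexHull ℝ _ ⟨k, ⟨hk, by rwa [mem_ball']⟩, rfl⟩
  obtain ⟨g, hg, hmem⟩ := exists_contMDiff_forall_mem_of_eventually_const_mem
    (I := 𝓘(ℝ, EuclideanSpace ℝ (Fin d))) (n := 1) (fun _ : U => convex_convexHull ℝ _) hloc
  let G : M → H := fun x => if hx : x ∈ K then f x else g ⟨x, hx⟩
  have hGK : EqOn G f K := fun x hx => dif_pos hx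
  have hGU (x : M) (hx : x ∉ K) : G x = g ⟨x, hx⟩ := dif_neg hx
  have hG : ContMDiffOn 𝓘(ℝ, EuclideanSpace ℝ (Fin d)) 𝓘(ℝ, H) 1 G Kᶜ := fun x hx => by
    refine (contMDiffAt_subtype_iff (U := U) (x := ⟨x, hx⟩).1 ?_).contMDiffWithinAt
    have heq : (fun y : U => G y) = g := funext fun y => hGU y y.2
    rw [heq]
    exact hg.contMDiffAt
  refine ⟨G, continuous_of_mem_convexHull_image_inter_ball hK hf hGK hG.continuousOn
    fun y hy => ?_, hGK, hG⟩
  rw [hGU y hy]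
  exact hmem ⟨y, hy⟩
end

section
/- (Lower semicontinuity of the Morse index.) Let H be a real Hilbert space, T a bounded self-adjoint operator on H, and n ∈ ℕ with n ≤ Ind(T). Then there exists δ > 0 such that every bounded self-adjoint operator S on H with ‖S − T‖ < δ satisfies Ind(S) ≥ n. -/
open RealInnerProductSpace

/-- The Morse index of a bounded self-adjoint operator `T` on a real Hilbert space: the
supremum (in `ℕ∞`) of the dimensions of subspaces on which the quadratic form
`v ↦ ⟪T v, v⟫` is negative definite. -/
noncomputable def morseIndex {H : Type*} [NormedAddCommGroup H] [InnerProductSpace ℝ H]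
    (T : H →L[ℝ] H) : ℕ∞ :=
  ⨆ (V : Submodule ℝ H) (_ : ∀ v ∈ V, v ≠ 0 → ⟪T v, v⟫ < (0:ℝ)),
    Cardinal.toENat (Module.rank ℝ V)

/-- A quadratic form `v ↦ ⟪T v, v⟫` that is negative definite on a finite-dimensional subspace
is uniformly negative there. -/
theorem exists_inner_map_self_le_neg_mul_norm_sq {H : Type*} [NormedAddCommGroup H]
    [InnerProductSpace ℝ H] (T : H →L[ℝ] H) (W : Submodule ℝ H) [FiniteDimensional ℝ W]
    (hW : ∀ v ∈ W, v ≠ 0 → ⟪T v, v⟫ < (0:ℝ)) :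
    ∃ c > (0:ℝ), ∀ v ∈ W, ⟪T v, v⟫ ≤ -c * ‖v‖ ^ 2 := by
  rcases (Metric.sphere (0 : W) 1).eq_empty_or_nonempty with hempty | hne
  · refine ⟨1, one_pos, fun v hv => ?_⟩
    have hv0 : v = 0 := by
      by_contra h
      have hmem : (‖v‖⁻¹ • ⟨v, hv⟩ : W) ∈ Metric.sphere (0 : W) 1 := by
        simp [norm_smul, norm_ne_zero_iff.mpr h]
      simp [hempty] at hmem
    simp [hv0]
  · obtain ⟨u, hu, hmax⟩ := (isCompact_sphere (0 : W) 1).exists_isMaxOn hne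
      (f := fun w : W => (⟪T (w : H), (w : H)⟫ : ℝ)) (by fun_prop)
    have hu0 : (u : H) ≠ 0 := by
      intro h
      simp [Submodule.coe_eq_zero.mp h] at hu
    refine ⟨-⟪T (u : H), (u : H)⟫, neg_pos.mpr (hW u u.2 hu0), fun v hv => ?_⟩
    rcases eq_or_ne v 0 with rfl | h
    · simp
    have hpos : 0 < ‖v‖ := norm_pos_iff.mpr h
    have hmem : (‖v‖⁻¹ • ⟨v, hv⟩ : W) ∈ Metric.sphere (0 : W) 1 := by
      simp [norm_smul, hpos.ne']
    have hle := isMaxOn_iff.mp hmax _ hmem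
    simp only [Submodule.coe_smul, map_smul, real_inner_smul_left, real_inner_smul_right] at hle
    rw [neg_neg]
    calc ⟪T v, v⟫ = ‖v‖⁻¹ * (‖v‖⁻¹ * ⟪T v, v⟫) * ‖v‖ ^ 2 := by field_simp
      _ ≤ ⟪T (u : H), (u : H)⟫ * ‖v‖ ^ 2 := by gcongr

/-- If `n ≤ Ind(T)`, there is an `n`-dimensional subspace on which `T` is negative definite. -/
theorem exists_submodule_finrank_eq_of_le_morseIndex {H : Type*} [NormedAddCommGroup H]
    [InnerProductSpace ℝ H] (T : H →L[ℝ] H) (n : ℕ) (hn : (n : ℕ∞) ≤ morseIndex T) :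
    ∃ W : Submodule ℝ H, FiniteDimensional ℝ W ∧ Module.finrank ℝ W = n ∧
      ∀ v ∈ W, v ≠ 0 → ⟪T v, v⟫ < (0:ℝ) := by
  obtain _ | m := n
  · exact ⟨⊥, inferInstance, by simp, fun v hv h => absurd ((Submodule.mem_bot ℝ).mp hv) h⟩
  have hlt : (m : ℕ∞) < morseIndex T :=
    lt_of_lt_of_le (by exact_mod_cast Nat.lt_succ_self m) hn
  simp only [morseIndex, lt_iSup_iff] at hlt
  obtain ⟨V, hV, hm⟩ := hlt
  have hrank : ((m + 1 : ℕ) : Cardinal) ≤ Module.rank ℝ V := by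
    rw [← Cardinal.natCast_le_toENat]
    exact_mod_cast Order.add_one_le_of_lt hm
  obtain ⟨v, hv⟩ := Module.le_rank_iff.mp hrank
  have hvH : LinearIndependent ℝ (fun i => (v i : H)) := hv.map' V.subtype V.ker_subtype
  have hspan : Submodule.span ℝ (Set.range fun i => (v i : H)) ≤ V :=
    Submodule.span_le.mpr (Set.range_subset_iff.mpr fun i => (v i).2)
  exact ⟨_, FiniteDimensional.span_of_finite ℝ (Set.finite_range _),
    by simpa using finrank_span_eq_card hvH, fun w hw => hV w (hspan hw)⟩

/-- Lower semicontinuity of the Morse index: if `T` is a bounded self-adjoint operator on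
a real Hilbert space and `n ≤ Ind(T)`, then there is `δ > 0` such that every bounded
self-adjoint operator `S` with `‖S - T‖ < δ` satisfies `Ind(S) ≥ n`. -/
theorem morseIndex_lower_semicontinuous
    {H : Type*} [NormedAddCommGroup H] [InnerProductSpace ℝ H] [CompleteSpace H]
    (T : H →L[ℝ] H) (hT : ∀ x y : H, ⟪T x, y⟫ = ⟪x, T y⟫)
    (n : ℕ) (hn : (n : ℕ∞) ≤ morseIndex T) :
    ∃ δ > (0:ℝ), ∀ S : H →L[ℝ] H, (∀ x y : H, ⟪S x, y⟫ = ⟪x, S y⟫) →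
      ‖S - T‖ < δ → (n : ℕ∞) ≤ morseIndex S := by
  obtain ⟨W, _, hrank, hneg⟩ := exists_submodule_finrank_eq_of_le_morseIndex T n hn
  obtain ⟨c, hc, hle⟩ := exists_inner_map_self_le_neg_mul_norm_sq T W hneg
  refine ⟨c, hc, fun S _ hS => ?_⟩
  have hSneg : ∀ v ∈ W, v ≠ 0 → ⟪S v, v⟫ < (0:ℝ) := by
    intro v hv h
    have hpos : 0 < ‖v‖ ^ 2 := by positivity
    have hdiff : ⟪(S - T) v, v⟫ ≤ ‖S - T‖ * ‖v‖ ^ 2 :=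
      calc ⟪(S - T) v, v⟫ ≤ ‖(S - T) v‖ * ‖v‖ := real_inner_le_norm _ _
        _ ≤ ‖S - T‖ * ‖v‖ * ‖v‖ := by gcongr; exact (S - T).le_opNorm v
        _ = ‖S - T‖ * ‖v‖ ^ 2 := by ring
    rw [sub_apply, inner_sub_left] at hdiff
    nlinarith [hle v hv, mul_lt_mul_of_pos_right hS hpos]
  calc (n : ℕ∞) = Cardinal.toENat (Module.rank ℝ W) := by simp [← Module.finrank_eq_rank, hrank]
    _ ≤ morseIndex S := le_iSup₂_of_le W hSneg le_rfl
end
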